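/- Let X ⊆ ℝ^n_+ be a nonempty compact set, Y ⊆ ℝ^m_+ a nonempty compact set, R_Y > 0 with ‖y‖ ≤ R_Y for all y ∈ Y, let 0 < α ≤ 1, A ∈ ℝ^{n×m} a matrix, and N ≥ 1 an integer. Write g(x, y) := xᵀ A y. Let (x_i)_{i=1}^N ⊆ X and (y_i)_{i=1}^N ⊆ ℝ^m be sequences such that: (a) for every i, g(x_i, y_i) ≥ sup_{y ∈ αY} g(x_i, y), where αY := {αy : y ∈ Y}; and (b) ȳ := (1/N) Σ_{i=1}^N y_i belongs to the Minkowski difference set Y − B₊(R_Y) := {u − b : u ∈ Y, b ∈ B₊(R_Y)}. Define x̄ := (1/N) Σ_{i=1}^N x_i and the regret R_N := Σ_{i=1}^N g(x_i, y_i) − inf_{x ∈ X} Σ_{i=1}^N g(x, y_i). Then sup_{y ∈ Y} g(x̄, y) ≤ inf_{x ∈ X} sup_{y ∈ α^{-1}(Y − B₊(R_Y))} g(x, y) + R_N / (α N), where α^{-1}(Y − B₊(R_Y)) := {α^{-1} z : z ∈ Y − B₊(R_Y)}. -/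

import Mathlib

/-!
Fix `y ∈ Y` and `x' ∈ X`. By linearity in the first argument and the oracle property (a),
`α * g(x̄, y)` is at most the average of `g(x_i, y_i)`, which by definition of the regret is
`(R_N + inf_x ∑ g(x, y_i)) / N`. The infimum is at most `∑ g(x', y_i) = N * g(x', ȳ)`, and by (b)
the point `α⁻¹ ȳ` lies in the enlarged set, so `g(x', ȳ)` is at most `α` times the supremum of
`g(x', ·)` over that set. Compactness of `X`, `Y` and `B₊(R_Y)` makes the infimum of
`∑ g(x, y_i)` over `X` and the suprema of `g(x, ·)` genuine.
-/

open scoped RealInnerProductSpace Pointwise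

/-- The bilinear form `xᵀ A y` associated with a matrix `A`. -/
def bform {n m : ℕ} (A : Matrix (Fin n) (Fin m) ℝ)
    (x : EuclideanSpace ℝ (Fin n)) (y : EuclideanSpace ℝ (Fin m)) : ℝ :=
  ∑ j, ∑ k, x j * A j k * y k

/-- Nonnegative part of the Euclidean ball of radius `R` in `ℝ^k`. -/
def Bplus (k : ℕ) (R : ℝ) : Set (EuclideanSpace ℝ (Fin k)) :=
  {x | (∀ i, 0 ≤ x i) ∧ ‖x‖ ≤ R}

lemma bform_smul_right {n m : ℕ} (A : Matrix (Fin n) (Fin m) ℝ)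
    (x : EuclideanSpace ℝ (Fin n)) (c : ℝ) (y : EuclideanSpace ℝ (Fin m)) :
    bform A x (c • y) = c * bform A x y := by
  simp only [bform, PiLp.smul_apply, smul_eq_mul, Finset.mul_sum]
  exact Finset.sum_congr rfl fun j _ => Finset.sum_congr rfl fun k _ => by ring

lemma bform_smul_left {n m : ℕ} (A : Matrix (Fin n) (Fin m) ℝ)
    (x : EuclideanSpace ℝ (Fin n)) (c : ℝ) (y : EuclideanSpace ℝ (Fin m)) :
    bform A (c • x) y = c * bform A x y := by
  simp only [bform, PiLp.smul_apply, smul_eq_mul, Finset.mul_sum]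
  exact Finset.sum_congr rfl fun j _ => Finset.sum_congr rfl fun k _ => by ring

lemma bform_sum_right {n m N : ℕ} (A : Matrix (Fin n) (Fin m) ℝ)
    (x : EuclideanSpace ℝ (Fin n)) (y : Fin N → EuclideanSpace ℝ (Fin m)) :
    bform A x (∑ i, y i) = ∑ i, bform A x (y i) := by
  simp only [bform, WithLp.ofLp_sum, Finset.sum_apply, Finset.mul_sum]
  rw [Finset.sum_comm (s := (Finset.univ : Finset (Fin N)))]
  refine Finset.sum_congr rfl fun j _ => ?_
  rw [Finset.sum_comm]

lemma bform_sum_left {n m N : ℕ} (A : Matrix (Fin n) (Fin m) ℝ)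
    (x : Fin N → EuclideanSpace ℝ (Fin n)) (y : EuclideanSpace ℝ (Fin m)) :
    bform A (∑ i, x i) y = ∑ i, bform A (x i) y := by
  simp only [bform, WithLp.ofLp_sum, Finset.sum_apply, Finset.sum_mul]
  rw [Finset.sum_comm (s := (Finset.univ : Finset (Fin N)))]
  refine Finset.sum_congr rfl fun j _ => ?_
  rw [Finset.sum_comm]

lemma continuous_bform_right {n m : ℕ} (A : Matrix (Fin n) (Fin m) ℝ)
    (x : EuclideanSpace ℝ (Fin n)) : Continuous (fun y => bform A x y) := by
  unfold bform
  fun_prop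

lemma continuous_bform_left {n m : ℕ} (A : Matrix (Fin n) (Fin m) ℝ)
    (y : EuclideanSpace ℝ (Fin m)) : Continuous (fun x => bform A x y) := by
  unfold bform
  fun_prop

lemma isCompact_Bplus (k : ℕ) (R : ℝ) : IsCompact (Bplus k R) := by
  refine (isCompact_closedBall (0 : EuclideanSpace ℝ (Fin k)) R).of_isClosed_subset ?_ ?_
  · have h : Bplus k R = (⋂ i, {x | 0 ≤ x i}) ∩ {x | ‖x‖ ≤ R} := by
      ext x
      simp [Bplus]
    rw [h]
    refine (isClosed_iInter fun i => ?_).inter (isClosed_le continuous_norm continuous_const)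
    exact isClosed_le continuous_const (by fun_prop)
  · intro x hx
    simpa using hx.2

/-- approximate infeasible saddle-point guarantee via an
(extended) approximation oracle for `Y`. -/
theorem stmt_6 {n m : ℕ}
    (X : Set (EuclideanSpace ℝ (Fin n))) (hXne : X.Nonempty) (hXc : IsCompact X)
    (hXpos : ∀ x ∈ X, ∀ i, 0 ≤ x i)
    (Y : Set (EuclideanSpace ℝ (Fin m))) (hYne : Y.Nonempty) (hYc : IsCompact Y)
    (hYpos : ∀ y ∈ Y, ∀ j, 0 ≤ y j)
    (RY : ℝ) (hRY : 0 < RY) (hRYb : ∀ y ∈ Y, ‖y‖ ≤ RY)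
    (α : ℝ) (hα0 : 0 < α) (hα1 : α ≤ 1)
    (A : Matrix (Fin n) (Fin m) ℝ) (N : ℕ) (hN : 1 ≤ N)
    (x : Fin N → EuclideanSpace ℝ (Fin n)) (hx : ∀ i, x i ∈ X)
    (y : Fin N → EuclideanSpace ℝ (Fin m))
    (ha : ∀ i, sSup ((fun yy => bform A (x i) yy) '' (α • Y)) ≤ bform A (x i) (y i))
    (hb : (N : ℝ)⁻¹ • ∑ i, y i ∈ Y - Bplus m RY)
    (xbar : EuclideanSpace ℝ (Fin n)) (hxbar : xbar = (N : ℝ)⁻¹ • ∑ i, x i)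
    (RN : ℝ)
    (hRN : RN = (∑ i, bform A (x i) (y i)) -
      sInf ((fun xx => ∑ i, bform A xx (y i)) '' X)) :
    sSup ((fun yy => bform A xbar yy) '' Y) ≤
      sInf ((fun xx => sSup ((fun yy => bform A xx yy) '' (α⁻¹ • (Y - Bplus m RY)))) '' X) +
        RN / (α * N) := by
  have hN0 : (0 : ℝ) < N := by exact_mod_cast hN
  have hsub : IsCompact (Y - Bplus m RY) := by
    rw [sub_eq_add_neg]
    exact hYc.add (isCompact_Bplus m RY).neg
  have hbdd : ∀ x', BddAbove ((fun yy => bform A x' yy) '' (α⁻¹ • (Y - Bplus m RY))) := fun x' =>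
    ((hsub.smul α⁻¹).image (continuous_bform_right A x')).bddAbove
  have hupper : ∀ y' ∈ Y, α * (N * bform A xbar y') ≤ ∑ i, bform A (x i) (y i) := by
    intro y' hy'
    rw [hxbar, bform_smul_left, bform_sum_left, mul_inv_cancel_left₀ hN0.ne', Finset.mul_sum]
    refine Finset.sum_le_sum fun i _ => ?_
    rw [← bform_smul_right]
    exact (le_csSup ((hYc.smul α).image (continuous_bform_right A (x i))).bddAbove
      ⟨α • y', Set.smul_mem_smul_set hy', rfl⟩).trans (ha i)
  have hlower : ∀ x' ∈ X, sInf ((fun xx => ∑ i, bform A xx (y i)) '' X) ≤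
      α * N * sSup ((fun yy => bform A x' yy) '' (α⁻¹ • (Y - Bplus m RY))) := by
    intro x' hx'
    have hcont : Continuous (fun xx => ∑ i, bform A xx (y i)) :=
      continuous_finsetSum _ fun i _ => continuous_bform_left A (y i)
    have hinf := csInf_le (hXc.image hcont).bddBelow ⟨x', hx', rfl⟩
    have hsup := le_csSup (hbdd x') ⟨_, Set.smul_mem_smul_set hb, rfl⟩
    refine hinf.trans (le_trans (le_of_eq ?_) (mul_le_mul_of_nonneg_left hsup (by positivity)))
    simp only [bform_smul_right, bform_sum_right]
    field_simp
  refine csSup_le (hYne.image _) ?_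
  rintro _ ⟨y', hy', rfl⟩
  rw [← sub_le_iff_le_add]
  refine le_csInf (hXne.image _) ?_
  rintro _ ⟨x', hx', rfl⟩
  have h1 := hupper y' hy'
  have h2 := hlower x' hx'
  have hαN : 0 < α * N := by positivity
  rw [sub_le_iff_le_add, ← sub_le_iff_le_add', le_div_iff₀ hαN]
  beta_reduce
  linarith
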